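/- arXiv:1706.09162 — 4 statements merged into one kernel-verified Lean document; each statement's English description precedes it below -/
import Mathlib

section
/- Let V be a real inner product space of finite dimension n, let ξ ∈ V with ⟪ξ, ξ⟫ = 1, and set η(X) := ⟪X, ξ⟫. Let R, R̃ : V → V → V → V be ℝ-trilinear maps related by R̃(X,Y)Z = R(X,Y)Z − 3(⟪Y,Z⟫ X − ⟪X,Z⟫ Y) + 2(η(Y)η(Z) X − η(X)η(Z) Y) + 2(⟪Y,Z⟫ η(X) − ⟪X,Z⟫ η(Y)) ξ for all X, Y, Z ∈ V. Define S(Y,Z) := trace of (X ↦ R(X,Y)Z) and S̃(Y,Z) := trace of (X ↦ R̃(X,Y)Z). Then S̃(Y, Z) = S(Y, Z) − (3n − 5) ⟪Y, Z⟫ + 2(n − 2) η(Y) η(Z) for all Y, Z ∈ V. -/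
open RealInnerProductSpace

/-!
Each correction term in (2.7a) has the form `B Y Z • L X - B X Z • L Y` for a bilinear form `B` and
an endomorphism `L`: the pairs `(B, L)` are `(g, id)`, `(η ⊗ η, id)` and `(g, η ⊗ ξ)`. The trace of
such a term over `X` is `tr L * B Y Z - B (L Y) Z`, which is `(n - 1) * B Y Z` for `L = id` and
`g ξ ξ * g Y Z - η Y * η Z` for the last pair.
-/

section Ricci

variable {K M : Type*} [CommRing K] [AddCommGroup M] [Module K M]

/-- The Ricci contraction of a curvature-type trilinear map `T`, sending `Y, Z` to the trace of
`X ↦ T X Y Z`, as a linear map in `T`. -/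
noncomputable def ricciContraction :
    (M →ₗ[K] M →ₗ[K] M →ₗ[K] M) →ₗ[K] LinearMap.BilinForm K M where
  toFun T := (LinearMap.lflip.toLinearMap ∘ₗ T.flip).compr₂ (LinearMap.trace K M)
  map_add' S T := LinearMap.ext₂ fun Y Z =>
    map_add (LinearMap.trace K M) ((S.flip Y).flip Z) ((T.flip Y).flip Z)
  map_smul' c T := LinearMap.ext₂ fun Y Z =>
    map_smul (LinearMap.trace K M) c ((T.flip Y).flip Z)

theorem ricciContraction_apply (T : M →ₗ[K] M →ₗ[K] M →ₗ[K] M) (Y Z : M) :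
    ricciContraction T Y Z = LinearMap.trace K M ((T.flip Y).flip Z) :=
  rfl

/-- The curvature-type map `X, Y, Z ↦ B Y Z • L X - B X Z • L Y` built from a bilinear form `B` and
an endomorphism `L`. For `L = id` it is the operator usually written `(X ∧_B Y) Z`, the curvature
tensor of constant curvature `1` when `B` is the metric. -/
def wedgeCurvature (B : LinearMap.BilinForm K M) (L : Module.End K M) :
    M →ₗ[K] M →ₗ[K] M →ₗ[K] M :=
  (LinearMap.smulRightₗ ∘ₗ B).flip ∘ₗ L - (LinearMap.smulRightₗ ∘ₗ B).compl₂ L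

theorem wedgeCurvature_apply (B : LinearMap.BilinForm K M) (L : Module.End K M) (X Y Z : M) :
    wedgeCurvature B L X Y Z = B Y Z • L X - B X Z • L Y :=
  rfl

variable [Module.Free K M] [Module.Finite K M]

theorem ricciContraction_wedgeCurvature (B : LinearMap.BilinForm K M) (L : Module.End K M)
    (Y Z : M) :
    ricciContraction (wedgeCurvature B L) Y Z
      = LinearMap.trace K M L * B Y Z - B (L Y) Z := by
  have endomorphism_eq : ((wedgeCurvature B L).flip Y).flip Z
      = B Y Z • L - (B.flip Z).smulRight (L Y) := rfl
  rw [ricciContraction_apply, endomorphism_eq, map_sub, map_smul, LinearMap.trace_smulRight,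
    LinearMap.BilinForm.flip_apply, smul_eq_mul, mul_comm]

theorem ricciContraction_wedgeCurvature_id (B : LinearMap.BilinForm K M) (Y Z : M) :
    ricciContraction (wedgeCurvature B LinearMap.id) Y Z
      = ((Module.finrank K M : K) - 1) * B Y Z := by
  rw [ricciContraction_wedgeCurvature, LinearMap.trace_id, LinearMap.id_apply, sub_one_mul]

theorem ricciContraction_wedgeCurvature_smulRight (B : LinearMap.BilinForm K M)
    (η : Module.Dual K M) (ξ Y Z : M) :
    ricciContraction (wedgeCurvature B (η.smulRight ξ)) Y Z = η ξ * B Y Z - η Y * B ξ Z := by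
  rw [ricciContraction_wedgeCurvature, LinearMap.trace_smulRight, LinearMap.smulRight_apply,
    map_smul, LinearMap.smul_apply, smul_eq_mul]

theorem stmt_5_general (g : LinearMap.BilinForm K M) (hg : g.IsSymm) (ξ : M) (η : M → K)
    (hη : ∀ X, η X = g X ξ) (R Rt : M →ₗ[K] M →ₗ[K] M →ₗ[K] M)
    (hRt : ∀ X Y Z : M,
      Rt X Y Z = R X Y Z - 3 • (g Y Z • X - g X Z • Y)
        + 2 • ((η Y * η Z) • X - (η X * η Z) • Y)
        + 2 • ((g Y Z * η X - g X Z * η Y) • ξ))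
    (Y Z : M) :
    ricciContraction Rt Y Z = ricciContraction R Y Z
      - (3 * ((Module.finrank K M : K) - 1) - 2 * g ξ ξ) * g Y Z
      + 2 * ((Module.finrank K M : K) - 2) * (η Y * η Z) := by
  obtain rfl : η = g.flip ξ := funext hη
  have curvature_eq : Rt = R + (-3 : K) • wedgeCurvature g LinearMap.id
      + (2 : K) • wedgeCurvature ((g.flip ξ).smulRight (g.flip ξ)) LinearMap.id
      + (2 : K) • wedgeCurvature g ((g.flip ξ).smulRight ξ) := by
    ext X Y Z
    simp only [hRt, LinearMap.add_apply, LinearMap.smul_apply,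
      wedgeCurvature_apply, LinearMap.smulRight_apply, LinearMap.id_apply, smul_eq_mul]
    module
  simp only [curvature_eq, map_add, map_smul, LinearMap.add_apply, LinearMap.smul_apply,
    ricciContraction_wedgeCurvature_id, ricciContraction_wedgeCurvature_smulRight,
    LinearMap.smulRight_apply, LinearMap.BilinForm.flip_apply, smul_eq_mul, hg.eq ξ Z]
  ring

end Ricci

/-- Ricci tensor relation (2.8a) for the semisymmetric metric connection on an
`n`-dimensional Kenmotsu manifold: if `R̃` is related to `R` by (2.7a), then
`S̃ Y Z = S Y Z - (3n - 5) ⟪Y, Z⟫ + 2 (n - 2) η Y η Z`. -/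
theorem stmt_5 {V : Type*} [NormedAddCommGroup V] [InnerProductSpace ℝ V]
    [FiniteDimensional ℝ V] (n : ℕ) (hdim : Module.finrank ℝ V = n)
    (ξ : V) (hξ : ⟪ξ, ξ⟫ = 1) (η : V → ℝ) (hη : ∀ X, η X = ⟪X, ξ⟫)
    (R Rt : V →ₗ[ℝ] V →ₗ[ℝ] V →ₗ[ℝ] V)
    (hRt : ∀ X Y Z : V,
      Rt X Y Z = R X Y Z - 3 • (⟪Y, Z⟫ • X - ⟪X, Z⟫ • Y)
        + 2 • ((η Y * η Z) • X - (η X * η Z) • Y)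
        + 2 • ((⟪Y, Z⟫ * η X - ⟪X, Z⟫ * η Y) • ξ))
    (S St : V → V → ℝ)
    (hS : ∀ Y Z : V, S Y Z = LinearMap.trace ℝ V ((R.flip Y).flip Z))
    (hSt : ∀ Y Z : V, St Y Z = LinearMap.trace ℝ V ((Rt.flip Y).flip Z)) :
    ∀ Y Z : V,
      St Y Z = S Y Z - (3 * (n : ℝ) - 5) * ⟪Y, Z⟫ + 2 * ((n : ℝ) - 2) * (η Y * η Z) := by
  intro Y Z
  have ricci_eq := stmt_5_general (innerₗ V) ⟨fun X Y => real_inner_comm Y X⟩ ξ η hη R Rt hRt Y Z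
  simp only [ricciContraction_apply, ← hS, ← hSt, innerₗ_apply_apply, hξ, hdim] at ricci_eq
  linear_combination ricci_eq
end

section
/- Let V be a real inner product space, let ξ ∈ V with ⟪ξ, ξ⟫ = 1, and set η(X) := ⟪X, ξ⟫. Let W be a real vector space and h : V → V → W a symmetric ℝ-bilinear map satisfying h(X, ξ) = 0 for all X ∈ V. Let R : V → V → V → V be an ℝ-trilinear map with R(X, Y)ξ = η(X) Y − η(Y) X for all X, Y ∈ V, let P : V → V → (W →ₗ W) be an ℝ-bilinear map into linear endomorphisms of W, and let L ∈ ℝ with L ≠ 1. If for all X, Y, Z, U ∈ V: P(X,Y)(h(Z,U)) − h(R(X,Y)Z, U) − h(Z, R(X,Y)U) = L·(⟪Y,Z⟫ h(X,U) − ⟪X,Z⟫ h(Y,U) + ⟪Y,U⟫ h(X,Z) − ⟪X,U⟫ h(Y,Z)), then h = 0. -/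
open RealInnerProductSpace

/-!
Write `(X ∧ Y) Z = g(Y, Z) X - g(X, Z) Y`. Both sides of the pseudo-parallel condition come from
derivation actions on `h`: the left is that of the curvature pair `(P(X, Y), R(X, Y))`, the right is
`-L` times that of the pair `(0, X ∧ Y)`. When `h(·, ξ) = 0`, a pair `(T, A)` acts by
`((T, A) · h)(Z, ξ) = -h(Z, A ξ)`, so the condition at `U = ξ` reads
`-h(Z, R(X, Y) ξ) = L h(Z, (X ∧ Y) ξ)`. Since `R(X, Y) ξ = -(X ∧ Y) ξ`, this is
`(1 - L) h(Z, (X ∧ Y) ξ) = 0`, and `(X ∧ ξ) ξ` is `g(ξ, ξ) X` up to a multiple of `ξ`.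
-/

section PseudoParallel

variable {K V W : Type*} [CommRing K] [AddCommGroup V] [Module K V] [AddCommGroup W] [Module K W]

/-- The endomorphism `X ∧ Y : Z ↦ g(Y, Z) X - g(X, Z) Y` attached to a bilinear form `g`. It is the
curvature operator of constant curvature `1`. -/
def metricWedge (g : LinearMap.BilinForm K V) (X Y : V) : Module.End K V :=
  (g Y).smulRight X - (g X).smulRight Y

@[simp]
lemma metricWedge_apply (g : LinearMap.BilinForm K V) (X Y Z : V) :
    metricWedge g X Y Z = g Y Z • X - g X Z • Y := rfl

/-- The derivation action `(T, A) · h` of an endomorphism `T` of the target and an endomorphism `A`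
of the source on a bilinear map `h`. For the normal curvature `T = R^⊥(X, Y)` and the tangent
curvature `A = R(X, Y)` it is `R̄(X, Y) · h`. -/
def derivationAction (T : Module.End K W) (A : Module.End K V) (h : V →ₗ[K] V →ₗ[K] W) :
    V →ₗ[K] V →ₗ[K] W :=
  h.compr₂ T - h.comp A - h.compl₂ A

@[simp]
lemma derivationAction_apply (T : Module.End K W) (A : Module.End K V) (h : V →ₗ[K] V →ₗ[K] W)
    (Z U : V) : derivationAction T A h Z U = T (h Z U) - h (A Z) U - h Z (A U) := rfl

/-- The Tachibana tensor: `tachibana g h X Y` is the bilinear map `(Z, U) ↦ Q(g, h)(Z, U; X, Y)`,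
with the sign convention `Q(g, h)(Z, U; X, Y) = h((X ∧ Y) Z, U) + h(Z, (X ∧ Y) U)`. -/
def tachibana (g : LinearMap.BilinForm K V) (h : V →ₗ[K] V →ₗ[K] W) (X Y : V) :
    V →ₗ[K] V →ₗ[K] W :=
  -derivationAction 0 (metricWedge g X Y) h

lemma tachibana_apply (g : LinearMap.BilinForm K V) (h : V →ₗ[K] V →ₗ[K] W) (X Y Z U : V) :
    tachibana g h X Y Z U =
      g Y Z • h X U - g X Z • h Y U + g Y U • h Z X - g X U • h Z Y := by
  simp only [tachibana, LinearMap.neg_apply, derivationAction_apply, metricWedge_apply,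
    LinearMap.zero_apply, map_sub, map_smul, LinearMap.sub_apply, LinearMap.smul_apply]
  abel

/-- Deszcz pseudo-parallelism `R̄(X, Y) · h = L Q(g, h)` of a bilinear map `h`, where `P` stands for
the normal curvature `R^⊥` and `R` for the tangent curvature. -/
def IsPseudoParallel (P : V → V → Module.End K W) (R : V → V → Module.End K V)
    (g : LinearMap.BilinForm K V) (L : K) (h : V →ₗ[K] V →ₗ[K] W) : Prop :=
  ∀ X Y, derivationAction (P X Y) (R X Y) h = L • tachibana g h X Y

variable {g : LinearMap.BilinForm K V} {h : V →ₗ[K] V →ₗ[K] W} {ξ : V}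

lemma derivationAction_apply_of_right_null (hhξ : ∀ X, h X ξ = 0) (T : Module.End K W)
    (A : Module.End K V) (Z : V) : derivationAction T A h Z ξ = -h Z (A ξ) := by
  simp only [derivationAction_apply, hhξ, map_zero, sub_zero, zero_sub]

lemma apply_metricWedge_self_of_right_null (hhξ : ∀ X, h X ξ = 0) (X Z : V) :
    h Z (metricWedge g X ξ ξ) = g ξ ξ • h Z X := by
  simp only [metricWedge_apply, map_sub, map_smul, hhξ, smul_zero, sub_zero]

variable {P : V → V → Module.End K W} {R : V → V → Module.End K V} {L : K}

lemma isPseudoParallel_iff_of_symm (hsymm : ∀ X Y, h X Y = h Y X) :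
    IsPseudoParallel P R g L h ↔ ∀ X Y Z U,
      P X Y (h Z U) - h (R X Y Z) U - h Z (R X Y U) =
        L • (g Y Z • h X U - g X Z • h Y U + g Y U • h X Z - g X U • h Y Z) := by
  simp only [IsPseudoParallel, LinearMap.ext_iff₂, derivationAction_apply, LinearMap.smul_apply,
    tachibana_apply]
  refine forall₄_congr fun X Y Z U => ?_
  rw [hsymm X Z, hsymm Y Z]

lemma IsPseudoParallel.apply_curvature_of_right_null (hpar : IsPseudoParallel P R g L h)
    (hhξ : ∀ X, h X ξ = 0) (X Y Z : V) :
    -h Z (R X Y ξ) = L • h Z (metricWedge g X Y ξ) := by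
  calc -h Z (R X Y ξ) = derivationAction (P X Y) (R X Y) h Z ξ :=
        (derivationAction_apply_of_right_null hhξ _ _ Z).symm
    _ = L • -derivationAction 0 (metricWedge g X Y) h Z ξ := by
        rw [hpar X Y, tachibana, LinearMap.smul_apply, LinearMap.smul_apply, LinearMap.neg_apply,
          LinearMap.neg_apply]
    _ = L • h Z (metricWedge g X Y ξ) := by
        rw [derivationAction_apply_of_right_null hhξ, neg_neg]

lemma IsPseudoParallel.one_sub_smul_apply_metricWedge (hpar : IsPseudoParallel P R g L h)
    (hhξ : ∀ X, h X ξ = 0) (hRξ : ∀ X Y, R X Y ξ = g X ξ • Y - g Y ξ • X) (X Y Z : V) :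
    (1 - L) • h Z (metricWedge g X Y ξ) = 0 := by
  have hR : R X Y ξ = -metricWedge g X Y ξ := by rw [hRξ, metricWedge_apply, neg_sub]
  have hcurv := hpar.apply_curvature_of_right_null hhξ X Y Z
  rw [hR, map_neg, neg_neg] at hcurv
  rw [sub_smul, one_smul, ← hcurv, sub_self]

theorem stmt_8_general (hξ : IsSMulRegular W (g ξ ξ)) (hhξ : ∀ X, h X ξ = 0)
    (hRξ : ∀ X Y, R X Y ξ = g X ξ • Y - g Y ξ • X) (hL : IsSMulRegular W (1 - L))
    (hpar : IsPseudoParallel P R g L h) : h = 0 := by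
  ext Z X
  have hwedge : h Z (metricWedge g X ξ ξ) = 0 :=
    hL.right_eq_zero_of_smul (hpar.one_sub_smul_apply_metricWedge hhξ hRξ X ξ Z)
  rw [apply_metricWedge_self_of_right_null hhξ] at hwedge
  exact hξ.right_eq_zero_of_smul hwedge

end PseudoParallel

/-- Algebraic core of Theorem 3.2: a Deszcz pseudo parallel second fundamental form
with `L ≠ 1` on a contact CR-submanifold of a Kenmotsu manifold vanishes. -/
theorem stmt_8 {V W : Type*} [NormedAddCommGroup V] [InnerProductSpace ℝ V]
    [AddCommGroup W] [Module ℝ W]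
    (ξ : V) (hξ : ⟪ξ, ξ⟫ = 1) (η : V → ℝ) (hη : ∀ X, η X = ⟪X, ξ⟫)
    (h : V →ₗ[ℝ] V →ₗ[ℝ] W) (hsymm : ∀ X Y : V, h X Y = h Y X)
    (hhξ : ∀ X : V, h X ξ = 0)
    (R : V →ₗ[ℝ] V →ₗ[ℝ] V →ₗ[ℝ] V)
    (hRξ : ∀ X Y : V, R X Y ξ = η X • Y - η Y • X)
    (P : V →ₗ[ℝ] V →ₗ[ℝ] W →ₗ[ℝ] W)
    (L : ℝ) (hL : L ≠ 1)
    (hyp : ∀ X Y Z U : V,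
      P X Y (h Z U) - h (R X Y Z) U - h Z (R X Y U)
        = L • (⟪Y, Z⟫ • h X U - ⟪X, Z⟫ • h Y U + ⟪Y, U⟫ • h X Z
            - ⟪X, U⟫ • h Y Z)) :
    h = 0 := by
  exact stmt_8_general (g := innerₗ V)
    (by simpa only [innerₗ_apply_apply, hξ] using IsSMulRegular.one W) hhξ
    (by simpa only [innerₗ_apply_apply, ← hη] using hRξ)
    (IsSMulRegular.of_ne_zero (sub_ne_zero.mpr hL.symm))
    ((isPseudoParallel_iff_of_symm hsymm).2 hyp)
end

section
/- Let V be a real inner product space, let ξ ∈ V with ⟪ξ, ξ⟫ = 1, and set η(X) := ⟪X, ξ⟫. Let W be a real vector space and h : V → V → W a symmetric ℝ-bilinear map satisfying h(X, ξ) = 0 for all X ∈ V. Let R : V → V → V → V be an ℝ-trilinear map with R(X, Y)ξ = η(X) Y − η(Y) X for all X, Y ∈ V, and let P : V → V → (W →ₗ W) be an ℝ-bilinear map into linear endomorphisms of W. If for all X, Y, Z, U ∈ V: P(X,Y)(h(Z,U)) − h(R(X,Y)Z, U) − h(Z, R(X,Y)U) = 0, then h = 0. -/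
open RealInnerProductSpace

/-!
Semiparallelity says that the curvature operators act on `h` by the Leibniz rule, so they preserve
its right kernel. That kernel contains `ξ`, hence also `R(ξ, Y)ξ = Y - η(Y)ξ`, hence every `Y`.
-/

theorem map_mem_ker_flip_of_leibniz {k M N W : Type*} [CommSemiring k]
    [AddCommMonoid M] [Module k M] [AddCommMonoid N] [Module k N]
    [AddCommMonoid W] [Module k W]
    {h : M →ₗ[k] N →ₗ[k] W} {A : M → M} {A' : N → N} {B : W →+ W}
    (leibniz : ∀ x y, B (h x y) = h (A x) y + h x (A' y))
    {y : N} (hy : y ∈ LinearMap.ker h.flip) :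
    A' y ∈ LinearMap.ker h.flip := by
  have hxy (x : M) : h x y = 0 := LinearMap.congr_fun hy x
  ext x
  calc
    h x (A' y) = h (A x) y + h x (A' y) := by rw [hxy, zero_add]
    _ = B (h x y) := (leibniz x y).symm
    _ = 0 := by rw [hxy, map_zero]

theorem stmt_9_general {k V W : Type*} [CommRing k]
    [AddCommGroup V] [Module k V] [AddCommGroup W] [Module k W]
    (ξ : V) (η : V → k) (hηξ : η ξ = 1)
    (h : V →ₗ[k] V →ₗ[k] W) (hhξ : ∀ X : V, h X ξ = 0)
    (R : V → V → V → V) (hRξ : ∀ X Y : V, R X Y ξ = η X • Y - η Y • X)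
    (P : V → V → W →+ W)
    (hyp : ∀ X Y Z U : V, P X Y (h Z U) - h (R X Y Z) U - h Z (R X Y U) = 0) :
    h = 0 := by
  have leibniz (X Y Z U : V) : P X Y (h Z U) = h (R X Y Z) U + h Z (R X Y U) := by
    rw [← sub_eq_zero, ← sub_sub, hyp]
  have hξ_mem : ξ ∈ LinearMap.ker h.flip := LinearMap.ext hhξ
  ext Z Y
  have hRY_mem : Y - η Y • ξ ∈ LinearMap.ker h.flip := by
    have hR_mem := map_mem_ker_flip_of_leibniz (leibniz ξ Y) hξ_mem
    rwa [hRξ, hηξ, one_smul] at hR_mem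
  have hY_mem : Y ∈ LinearMap.ker h.flip :=
    (Submodule.sub_mem_iff_left _ (Submodule.smul_mem _ (η Y) hξ_mem)).mp hRY_mem
  exact LinearMap.congr_fun hY_mem Z

/-- Algebraic core of Corollary 3.2: a semiparallel second fundamental form
on a contact CR-submanifold of a Kenmotsu manifold vanishes. -/
theorem stmt_9 {V W : Type*} [NormedAddCommGroup V] [InnerProductSpace ℝ V]
    [AddCommGroup W] [Module ℝ W]
    (ξ : V) (hξ : ⟪ξ, ξ⟫ = 1) (η : V → ℝ) (hη : ∀ X, η X = ⟪X, ξ⟫)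
    (h : V →ₗ[ℝ] V →ₗ[ℝ] W) (hsymm : ∀ X Y : V, h X Y = h Y X)
    (hhξ : ∀ X : V, h X ξ = 0)
    (R : V →ₗ[ℝ] V →ₗ[ℝ] V →ₗ[ℝ] V)
    (hRξ : ∀ X Y : V, R X Y ξ = η X • Y - η Y • X)
    (P : V →ₗ[ℝ] V →ₗ[ℝ] W →ₗ[ℝ] W)
    (hyp : ∀ X Y Z U : V,
      P X Y (h Z U) - h (R X Y Z) U - h Z (R X Y U) = 0) :
    h = 0 :=
  stmt_9_general ξ η ((hη ξ).trans hξ) h hhξ (fun X Y Z => R X Y Z) hRξ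
    (fun X Y => (P X Y).toAddMonoidHom) hyp
end

section
/- Let V be a real inner product space, let ξ ∈ V with ⟪ξ, ξ⟫ = 1, and set η(X) := ⟪X, ξ⟫. Let W be a real vector space and h : V → V → W a symmetric ℝ-bilinear map satisfying h(X, ξ) = 0 for all X ∈ V. Let R̃ : V → V → V → V be an ℝ-trilinear map with R̃(X, Y)ξ = 2(η(X) Y − η(Y) X) for all X, Y ∈ V, and let P : V → V → (W →ₗ W) be an ℝ-bilinear map into linear endomorphisms of W. If for all X, Y, Z, U ∈ V: P(X,Y)(h(Z,U)) − h(R̃(X,Y)Z, U) − h(Z, R̃(X,Y)U) = 0, then h = 0. -/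
open RealInnerProductSpace

section Semiparallel

variable {R V W : Type*} [CommRing R] [AddCommGroup V] [Module R V] [AddCommGroup W] [Module R W]

/-- The semiparallel condition `K · h = 0` on a vector-valued bilinear form `h` (a second
fundamental form): the operators `K X Y` on the tangent space `V` and `P X Y` on the normal space
`W`, acting on `h` by the Leibniz rule, annihilate it. `K` and `P` are the tangential and normal
curvature operators; their dependence on `X` and `Y` may be arbitrary. -/
def IsSemiparallel (P : V → V → Module.End R W) (K : V → V → Module.End R V)
    (h : V →ₗ[R] V →ₗ[R] W) : Prop :=
  ∀ X Y Z U : V, P X Y (h Z U) - h (K X Y Z) U - h Z (K X Y U) = 0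

variable {P : V → V → Module.End R W} {K : V → V → Module.End R V} {h : V →ₗ[R] V →ₗ[R] W} {ξ : V}

theorem IsSemiparallel.apply_curvature_eq_zero (hsemi : IsSemiparallel P K h)
    (hξ : ∀ X, h X ξ = 0) (X Y Z : V) : h Z (K X Y ξ) = 0 := by
  simpa only [hξ, map_zero, sub_zero, zero_sub, neg_eq_zero] using hsemi X Y Z ξ

/-- The semisymmetric metric connection of a Kenmotsu manifold has `c = 2`, its Levi-Civita
connection has `c = 1`. -/
theorem stmt_13_general {c : R} (hc : IsSMulRegular W c) {η : V → R} (hηξ : η ξ = 1)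
    (hξ : ∀ X, h X ξ = 0) (hK : ∀ X Y, K X Y ξ = c • (η X • Y - η Y • X))
    (hsemi : IsSemiparallel P K h) : h = 0 := by
  ext Z Y
  have smul_apply_eq_zero : c • h Z Y = 0 := calc
    c • h Z Y = h Z (c • (η ξ • Y - η Y • ξ)) := by
      simp only [hηξ, map_smul, map_sub, hξ, smul_zero, one_smul, sub_zero]
    _ = h Z (K ξ Y ξ) := by rw [hK]
    _ = 0 := hsemi.apply_curvature_eq_zero hξ ξ Y Z
  exact hc.right_eq_zero_of_smul smul_apply_eq_zero

end Semiparallel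

/-- Algebraic core of Corollary 4.2: a second fundamental form that is semiparallel
with respect to the semisymmetric metric connection (whose curvature satisfies
`R̃ (X, Y) ξ = 2 (η X • Y - η Y • X)`) vanishes. -/
theorem stmt_13 {V W : Type*} [NormedAddCommGroup V] [InnerProductSpace ℝ V]
    [AddCommGroup W] [Module ℝ W]
    (ξ : V) (hξ : ⟪ξ, ξ⟫ = 1) (η : V → ℝ) (hη : ∀ X, η X = ⟪X, ξ⟫)
    (h : V →ₗ[ℝ] V →ₗ[ℝ] W) (hsymm : ∀ X Y : V, h X Y = h Y X)
    (hhξ : ∀ X : V, h X ξ = 0)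
    (Rt : V →ₗ[ℝ] V →ₗ[ℝ] V →ₗ[ℝ] V)
    (hRtξ : ∀ X Y : V, Rt X Y ξ = 2 • (η X • Y - η Y • X))
    (P : V →ₗ[ℝ] V →ₗ[ℝ] W →ₗ[ℝ] W)
    (hyp : ∀ X Y Z U : V,
      P X Y (h Z U) - h (Rt X Y Z) U - h Z (Rt X Y U) = 0) :
    h = 0 := by
  exact stmt_13_general (c := 2) (P := (P · ·)) (K := (Rt · ·)) (.of_ne_zero two_ne_zero)
    ((hη ξ).trans hξ) hhξ (fun X Y ↦ by rw [hRtξ, ofNat_smul_eq_nsmul ℝ]) hyp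
end
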